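/- Let u, v, w, y ∈ ℝ⁷ be orthonormal and let V = span_ℝ{u,v,w,y}. Then |(∗φ)(u,v,w,y)| = 1 (i.e. V is, up to orientation, calibrated by ∗φ) if and only if φ(a,b,c) = 0 for all a, b, c ∈ V. -/

import Mathlib

/-!
STATEMENT 0: For linearly independent u, v, w ∈ ℝ⁷, the subspace
V = span{u,v,w} is closed under the G₂ cross product iff the 1-form
x ↦ (∗φ)(u,v,w,x) vanishes identically.
-/

noncomputable section

/-- ℝ⁷ with coordinates (x₀,x₁,x₂,x₃,y₁,y₂,y₃) indexed 0,…,6. -/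
abbrev V7 := Fin 7 → ℝ

/-- Standard basis vector. -/
def e7 (k : Fin 7) : V7 := fun j => if j = k then 1 else 0

/-- The wedge of three coordinate 1-forms, `(e^p ∧ e^q ∧ e^r)(a,b,c)`. -/
def form3 (p q r : Fin 7) (a b c : V7) : ℝ :=
  Matrix.det !![a p, a q, a r; b p, b q, b r; c p, c q, c r]

/-- The standard G₂ 3-form φ = f¹∧f²∧f³ + f¹∧(e⁰∧e¹ − e²∧e³)
    + f²∧(e⁰∧e² − e³∧e¹) + f³∧(e⁰∧e³ − e¹∧e²), with e⁰,e¹,e²,e³,f¹,f²,f³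
    the coordinate 1-forms indexed 0,1,2,3,4,5,6. -/
def phi7 (a b c : V7) : ℝ :=
  form3 4 5 6 a b c
    + (form3 4 0 1 a b c - form3 4 2 3 a b c)
    + (form3 5 0 2 a b c - form3 5 3 1 a b c)
    + (form3 6 0 3 a b c - form3 6 1 2 a b c)

/-- The wedge of four coordinate 1-forms. -/
def form4 (p q r s : Fin 7) (a b c d : V7) : ℝ :=
  Matrix.det !![a p, a q, a r, a s; b p, b q, b r, b s;
                c p, c q, c r, c s; d p, d q, d r, d s]

/-- The dual 4-form ∗φ = e⁰∧e¹∧e²∧e³ − f²∧f³∧(e⁰∧e¹ − e²∧e³)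
    − f³∧f¹∧(e⁰∧e² − e³∧e¹) − f¹∧f²∧(e⁰∧e³ − e¹∧e²). -/
def starphi7 (a b c d : V7) : ℝ :=
  form4 0 1 2 3 a b c d
    - (form4 5 6 0 1 a b c d - form4 5 6 2 3 a b c d)
    - (form4 6 4 0 2 a b c d - form4 6 4 3 1 a b c d)
    - (form4 4 5 0 3 a b c d - form4 4 5 1 2 a b c d)

/-- The cross product, characterized by ⟨u × v, z⟩ = φ(u,v,z) for the
    standard inner product; its k-th coordinate is φ(u,v,e_k). -/
def cross7 (a b : V7) : V7 := fun k => phi7 a b (e7 k)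

/-- The standard inner product on ℝ⁷. -/
def dot7 (a b : V7) : ℝ := ∑ k, a k * b k

/-!
The proof rests on the Harvey–Lawson coassociator equality
`det (⟨xᵢ, xⱼ⟩) = (∗φ)(x₀, x₁, x₂, x₃)² + |∑ₚ (-1)ᵖ φ(x₀, …, x̂ₚ, …, x₃) xₚ|²`.
It comes from `|u|² |χ|² = ⟨u, χ⟩² + |u × χ|²` applied to the triple cross product
`χ = χ(v, w, y)`, for which `⟨u, χ⟩ = ±(∗φ)(u, v, w, y)`, `|χ|²` is the Gram determinant of
`v, w, y` minus `φ(v, w, y)²`, and `u × χ` is again a combination of `v`, `w`, `y` and their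
pairwise cross products. When the `xᵢ` are independent, `(∗φ)²` thus attains the Gram determinant
exactly when the four coefficients `φ(x₀, …, x̂ₚ, …, x₃)` vanish, that is, when `φ` vanishes on
the span, since any three of the four indices are obtained by omitting one.
-/

open scoped Matrix

theorem multilinearMap_eq_zero_of_mem_span_range {R M N ι κ : Type*} [CommSemiring R]
    [AddCommMonoid M] [Module R M] [AddCommMonoid N] [Module R N] [Finite ι] [Finite κ]
    (f : MultilinearMap R (fun _ : ι ↦ M) N) (x : κ → M) (hf : ∀ g : ι → κ, f (x ∘ g) = 0)
    {a : ι → M} (ha : ∀ i, a i ∈ Submodule.span R (Set.range x)) : f a = 0 := by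
  classical
  cases nonempty_fintype ι
  cases nonempty_fintype κ
  choose c hc using fun i ↦ (Submodule.mem_span_range_iff_exists_fun R).mp (ha i)
  have hfg (g : ι → κ) : f (fun i ↦ x (g i)) = 0 := hf g
  simp only [← funext hc, f.map_sum, f.map_smul_univ, hfg, smul_zero, Finset.sum_const_zero]

section AlternatingMap

variable {R M N : Type*} [CommRing R] [AddCommGroup M] [Module R M] [AddCommGroup N] [Module R N]

theorem alternatingMap_comp_eq_zero_of_succAbove {n : ℕ} (f : M [⋀^Fin n]→ₗ[R] N)
    (x : Fin (n + 1) → M) (hf : ∀ p : Fin (n + 1), f (x ∘ p.succAbove) = 0)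
    (g : Fin n → Fin (n + 1)) : f (x ∘ g) = 0 := by
  obtain ⟨p, hp⟩ : ∃ p, ∀ i, g i ≠ p := by
    have hg : ¬ Function.Surjective g := fun h ↦ by simpa using Fintype.card_le_of_surjective g h
    simpa only [Function.Surjective, not_forall, not_exists] using hg
  choose σ hσ using fun i ↦ Fin.exists_succAbove_eq (hp i)
  obtain rfl : p.succAbove ∘ σ = g := funext hσ
  by_cases σ_inj : Function.Injective σ
  · have hperm := f.map_perm (x ∘ p.succAbove) (Equiv.ofBijective σ σ_inj.bijective_of_finite)
    rw [hf, smul_zero] at hperm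
    exact hperm
  · exact f.map_eq_zero_of_not_injective _ fun h ↦ σ_inj (h.of_comp (f := x ∘ p.succAbove))

theorem alternatingMap_eq_zero_on_span_range_iff {n : ℕ} (f : M [⋀^Fin n]→ₗ[R] N)
    (x : Fin (n + 1) → M) :
    (∀ a : Fin n → M, (∀ i, a i ∈ Submodule.span R (Set.range x)) → f a = 0) ↔
      ∀ p : Fin (n + 1), f (x ∘ p.succAbove) = 0 :=
  ⟨fun h _ ↦ h _ fun _ ↦ Submodule.subset_span (Set.mem_range_self _), fun h _ ha ↦
    multilinearMap_eq_zero_of_mem_span_range f.toMultilinearMap x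
      (alternatingMap_comp_eq_zero_of_succAbove f x h) ha⟩

theorem alternatingMap_eq_zero_on_span_range_iff_sum_smul_eq_zero {n : ℕ}
    (f : M [⋀^Fin n]→ₗ[R] R) {x : Fin (n + 1) → M} (hx : LinearIndependent R x) :
    (∀ a : Fin n → M, (∀ i, a i ∈ Submodule.span R (Set.range x)) → f a = 0) ↔
      ∑ p : Fin (n + 1), ((-1) ^ (p : ℕ) * f (x ∘ p.succAbove)) • x p = 0 := by
  rw [alternatingMap_eq_zero_on_span_range_iff]
  refine ⟨fun h ↦ by simp only [h, mul_zero, zero_smul, Finset.sum_const_zero], fun h p ↦ ?_⟩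
  have hp := Fintype.linearIndependent_iff.mp hx _ h p
  exact (((isUnit_neg_one (α := R)).pow p).mul_right_eq_zero).mp hp

end AlternatingMap

theorem linearIndependent_row_of_mul_eq_one {R m n : Type*} [Ring R] [Finite m]
    [DecidableEq m] [Fintype n] {A : Matrix m n R} {B : Matrix n m R} (hAB : A * B = 1) :
    LinearIndependent R A.row := by
  cases nonempty_fintype m
  have hinv : Function.LeftInverse (· ᵥ* B) (· ᵥ* A) := fun c ↦ by
    simp only [Matrix.vecMul_vecMul, hAB, Matrix.vecMul_one]
  exact Matrix.vecMul_injective_iff.mp hinv.injective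

theorem det_fin_four {R : Type*} [CommRing R] (A : Matrix (Fin 4) (Fin 4) R) : A.det =
    (A 0 0 * A 1 1 - A 0 1 * A 1 0) * (A 2 2 * A 3 3 - A 2 3 * A 3 2)
    - (A 0 0 * A 1 2 - A 0 2 * A 1 0) * (A 2 1 * A 3 3 - A 2 3 * A 3 1)
    + (A 0 0 * A 1 3 - A 0 3 * A 1 0) * (A 2 1 * A 3 2 - A 2 2 * A 3 1)
    + (A 0 1 * A 1 2 - A 0 2 * A 1 1) * (A 2 0 * A 3 3 - A 2 3 * A 3 0)
    - (A 0 1 * A 1 3 - A 0 3 * A 1 1) * (A 2 0 * A 3 2 - A 2 2 * A 3 0)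
    + (A 0 2 * A 1 3 - A 0 3 * A 1 2) * (A 2 0 * A 3 1 - A 2 1 * A 3 0) := by
  rw [Matrix.det_succ_row_zero, Fin.sum_univ_four]
  simp only [Matrix.det_fin_three, Matrix.submatrix_apply, Fin.succAbove, Fin.reduceSucc,
    Fin.reduceCastSucc, Fin.castSucc_zero, Fin.castSucc_one, Fin.succ_zero_eq_one, Fin.reduceLT,
    ↓reduceIte, Fin.coe_ofNat_eq_mod]
  ring

/-- The Gram matrix of a family of vectors of `ℝ⁷`; `Matrix.gram` does not apply because `V7`
carries no inner product space structure. -/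
def gram7 {ι : Type*} (x : ι → V7) : Matrix ι ι ℝ :=
  Matrix.of x * (Matrix.of x)ᵀ

theorem gram7_apply {ι : Type*} (x : ι → V7) (i j : ι) : gram7 x i j = x i ⬝ᵥ x j := rfl

/-- The wedge of the coordinate 1-forms with indices `s 0, …, s (n - 1)` as an alternating map;
it packages `form3` and `form4`. -/
def coordWedge7 {n : ℕ} (s : Fin n → Fin 7) : V7 [⋀^Fin n]→ₗ[ℝ] ℝ :=
  Matrix.detRowAlternating.compLinearMap (LinearMap.funLeft ℝ ℝ s)

theorem coordWedge7_fin_three (p q r : Fin 7) (a b c : V7) :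
    coordWedge7 ![p, q, r] ![a, b, c] = form3 p q r a b c := by
  rw [coordWedge7, AlternatingMap.compLinearMap_apply, form3]
  congr 1
  ext i j
  fin_cases i <;> fin_cases j <;> rfl

theorem coordWedge7_fin_four (p q r s : Fin 7) (a b c d : V7) :
    coordWedge7 ![p, q, r, s] ![a, b, c, d] = form4 p q r s a b c d := by
  rw [coordWedge7, AlternatingMap.compLinearMap_apply, form4]
  congr 1
  ext i j
  fin_cases i <;> fin_cases j <;> rfl

/-- The 3-form `φ` as an alternating map. -/
def phi7Alternating : V7 [⋀^Fin 3]→ₗ[ℝ] ℝ :=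
  coordWedge7 ![4, 5, 6]
    + (coordWedge7 ![4, 0, 1] - coordWedge7 ![4, 2, 3])
    + (coordWedge7 ![5, 0, 2] - coordWedge7 ![5, 3, 1])
    + (coordWedge7 ![6, 0, 3] - coordWedge7 ![6, 1, 2])

/-- The 4-form `∗φ` as an alternating map. -/
def starphi7Alternating : V7 [⋀^Fin 4]→ₗ[ℝ] ℝ :=
  coordWedge7 ![0, 1, 2, 3]
    - (coordWedge7 ![5, 6, 0, 1] - coordWedge7 ![5, 6, 2, 3])
    - (coordWedge7 ![6, 4, 0, 2] - coordWedge7 ![6, 4, 3, 1])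
    - (coordWedge7 ![4, 5, 0, 3] - coordWedge7 ![4, 5, 1, 2])

theorem phi7Alternating_apply (a b c : V7) : phi7Alternating ![a, b, c] = phi7 a b c := by
  simp only [phi7Alternating, phi7, AlternatingMap.add_apply, AlternatingMap.sub_apply,
    coordWedge7_fin_three]

theorem starphi7Alternating_apply (a b c d : V7) :
    starphi7Alternating ![a, b, c, d] = starphi7 a b c d := by
  simp only [starphi7Alternating, starphi7, AlternatingMap.sub_apply, coordWedge7_fin_four]

theorem phi7_rotate (a b c : V7) : phi7 b c a = phi7 a b c := by
  have h := phi7Alternating.map_perm ![a, b, c] (finRotate 3)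
  have hrot : ![a, b, c] ∘ finRotate 3 = ![b, c, a] := by
    ext i : 1; fin_cases i <;> rfl
  simpa [hrot, phi7Alternating_apply, sign_finRotate] using h

theorem phi7_self_right (a b : V7) : phi7 a b b = 0 := by
  rw [← phi7Alternating_apply]
  exact phi7Alternating.map_eq_zero_of_eq _ (i := 1) (j := 2) rfl (by decide)

theorem phi7_swap_right (a b c : V7) : phi7 a c b = -phi7 a b c := by
  have h := phi7Alternating.map_swap ![a, b, c] (i := 1) (j := 2) (by decide)
  have hswap : ![a, b, c] ∘ Equiv.swap 1 2 = ![a, c, b] := by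
    ext i : 1; fin_cases i <;> rfl
  simpa only [hswap, phi7Alternating_apply] using h

theorem starphi7_rotate (a b c d : V7) : starphi7 b c d a = -starphi7 a b c d := by
  have h := starphi7Alternating.map_perm ![a, b, c, d] (finRotate 4)
  have hrot : ![a, b, c, d] ∘ finRotate 4 = ![b, c, d, a] := by
    ext i : 1; fin_cases i <;> rfl
  have hsign : (finRotate 4).sign = -1 := by decide
  simpa [hrot, hsign, starphi7Alternating_apply] using h

theorem starphi7_eq_zero_of_eq {a b c d : V7} {i j : Fin 4}
    (h : ![a, b, c, d] i = ![a, b, c, d] j) (hij : i ≠ j) : starphi7 a b c d = 0 := by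
  rw [← starphi7Alternating_apply]
  exact starphi7Alternating.map_eq_zero_of_eq _ h hij

theorem phi7_eq_zero_on_iff (S : Submodule ℝ V7) :
    (∀ a ∈ S, ∀ b ∈ S, ∀ c ∈ S, phi7 a b c = 0) ↔
      ∀ x : Fin 3 → V7, (∀ i, x i ∈ S) → phi7Alternating x = 0 := by
  simp only [← phi7Alternating_apply]
  refine ⟨fun h x hx ↦ ?_, fun h a ha b hb c hc ↦ h _ ?_⟩
  · convert h (x 0) (hx 0) (x 1) (hx 1) (x 2) (hx 2)
    ext i : 1
    fin_cases i <;> rfl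
  · simp [Fin.forall_fin_succ, ha, hb, hc]

theorem cross7_eq (a b : V7) : cross7 a b = ![
    a 1 * b 4 - a 4 * b 1 + (a 2 * b 5 - a 5 * b 2) + (a 3 * b 6 - a 6 * b 3),
    a 4 * b 0 - a 0 * b 4 - (a 2 * b 6 - a 6 * b 2) + (a 3 * b 5 - a 5 * b 3),
    a 5 * b 0 - a 0 * b 5 + (a 1 * b 6 - a 6 * b 1) - (a 3 * b 4 - a 4 * b 3),
    a 6 * b 0 - a 0 * b 6 - (a 1 * b 5 - a 5 * b 1) + (a 2 * b 4 - a 4 * b 2),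
    a 0 * b 1 - a 1 * b 0 - (a 2 * b 3 - a 3 * b 2) + (a 5 * b 6 - a 6 * b 5),
    a 0 * b 2 - a 2 * b 0 + (a 1 * b 3 - a 3 * b 1) - (a 4 * b 6 - a 6 * b 4),
    a 0 * b 3 - a 3 * b 0 - (a 1 * b 2 - a 2 * b 1) + (a 4 * b 5 - a 5 * b 4)] := by
  ext k
  fin_cases k <;> simp only [cross7, phi7, form3, e7, Matrix.det_fin_three, Matrix.of_apply,
    Matrix.cons_val', Matrix.cons_val, Fin.zero_eta, Fin.mk_one, Fin.reduceFinMk, Fin.reduceEq,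
    ↓reduceIte] <;> ring

theorem cross7_dotProduct (a b c : V7) : cross7 a b ⬝ᵥ c = phi7 a b c := by
  simp only [cross7_eq, phi7, form3, Matrix.det_fin_three, dotProduct, Fin.sum_univ_seven,
    Matrix.of_apply, Matrix.cons_val', Matrix.cons_val]
  ring

theorem cross7_dotProduct_cross7 (a b c d : V7) :
    cross7 a b ⬝ᵥ cross7 c d = a ⬝ᵥ c * b ⬝ᵥ d - a ⬝ᵥ d * b ⬝ᵥ c - starphi7 a b c d := by
  simp only [cross7_eq, starphi7, form4, det_fin_four, dotProduct, Fin.sum_univ_seven,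
    Matrix.of_apply, Matrix.cons_val', Matrix.cons_val]
  ring

theorem cross7_dotProduct_cross7_left (a b c : V7) :
    cross7 a b ⬝ᵥ cross7 a c = a ⬝ᵥ a * b ⬝ᵥ c - a ⬝ᵥ c * a ⬝ᵥ b := by
  have h : starphi7 a b a c = 0 := starphi7_eq_zero_of_eq (i := 0) (j := 2) rfl (by decide)
  rw [cross7_dotProduct_cross7, h, sub_zero, dotProduct_comm b a]

theorem cross7_dotProduct_self (a b : V7) :
    cross7 a b ⬝ᵥ cross7 a b = a ⬝ᵥ a * b ⬝ᵥ b - (a ⬝ᵥ b) ^ 2 := by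
  rw [cross7_dotProduct_cross7_left, sq]

/-- The triple cross product `χ(a, b, c)`, normalized so that
`⟨χ(a, b, c), d⟩ = (∗φ)(a, b, c, d)`. -/
def tripleCross7 (a b c : V7) : V7 :=
  cross7 a (cross7 b c) + (a ⬝ᵥ b) • c - (a ⬝ᵥ c) • b

/-- The image under the cross product of the bivector `u ⌟ (v ∧ w ∧ y)`. -/
def contractCross7 (u v w y : V7) : V7 :=
  (u ⬝ᵥ v) • cross7 w y - (u ⬝ᵥ w) • cross7 v y + (u ⬝ᵥ y) • cross7 v w

theorem cross7_tripleCross7 (u v w y : V7) :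
    cross7 u (tripleCross7 v w y) =
      phi7 u w y • v - phi7 u v y • w + phi7 u v w • y
        - contractCross7 u v w y := by
  simp only [← cross7_dotProduct, tripleCross7, contractCross7, dotProduct,
    Fin.sum_univ_seven]
  ext k
  fin_cases k <;> simp only [Fin.zero_eta, Fin.mk_one, Fin.reduceFinMk, Pi.add_apply,
    Pi.sub_apply, Pi.smul_apply, smul_eq_mul, cross7_eq, Matrix.cons_val] <;> ring

theorem tripleCross7_dotProduct (a b c d : V7) : tripleCross7 a b c ⬝ᵥ d = starphi7 a b c d := by
  have h : cross7 a (cross7 b c) ⬝ᵥ d = cross7 d a ⬝ᵥ cross7 b c := by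
    rw [cross7_dotProduct, cross7_dotProduct, phi7_rotate]
  rw [tripleCross7, sub_dotProduct, add_dotProduct, smul_dotProduct, smul_dotProduct, h,
    cross7_dotProduct_cross7, starphi7_rotate d, dotProduct_comm d b, dotProduct_comm d c,
    smul_eq_mul, smul_eq_mul]
  ring

theorem tripleCross7_dotProduct_self (a b c : V7) :
    tripleCross7 a b c ⬝ᵥ tripleCross7 a b c = (gram7 ![a, b, c]).det - phi7 a b c ^ 2 := by
  have hb : tripleCross7 a b c ⬝ᵥ b = 0 :=
    (tripleCross7_dotProduct a b c b).trans <|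
      starphi7_eq_zero_of_eq (i := 1) (j := 3) rfl (by decide)
  have hc : tripleCross7 a b c ⬝ᵥ c = 0 :=
    (tripleCross7_dotProduct a b c c).trans <|
      starphi7_eq_zero_of_eq (i := 2) (j := 3) rfl (by decide)
  have hdouble : cross7 a (cross7 b c) ⬝ᵥ cross7 a (cross7 b c) =
      a ⬝ᵥ a * (b ⬝ᵥ b * c ⬝ᵥ c - (b ⬝ᵥ c) ^ 2) - phi7 a b c ^ 2 := by
    rw [cross7_dotProduct_self, cross7_dotProduct_self, dotProduct_comm a (cross7 b c),
      cross7_dotProduct, phi7_rotate]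
  simp only [tripleCross7, add_dotProduct, sub_dotProduct, dotProduct_add, dotProduct_sub,
    smul_dotProduct, dotProduct_smul, smul_eq_mul, Matrix.det_fin_three, gram7_apply,
    Matrix.cons_val, dotProduct_comm c b, dotProduct_comm b a, dotProduct_comm c a,
    dotProduct_comm _ (cross7 a _)] at hb hc ⊢
  linear_combination hdouble + 2 * a ⬝ᵥ b * hc - 2 * a ⬝ᵥ c * hb

theorem contractCross7_dotProduct_combination (u v w y : V7) (r s t : ℝ) :
    contractCross7 u v w y ⬝ᵥ (r • v + s • w + t • y) =
      phi7 v w y * u ⬝ᵥ (r • v + s • w + t • y) := by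
  have hwyv : phi7 w y v = phi7 v w y := phi7_rotate v w y
  have hvyw : phi7 v y w = -phi7 v w y := phi7_swap_right v w y
  have hself (a b : V7) : phi7 a b a = 0 := by rw [← phi7_rotate, phi7_self_right]
  simp only [contractCross7, add_dotProduct, sub_dotProduct, dotProduct_add, smul_dotProduct,
    dotProduct_smul, smul_eq_mul, cross7_dotProduct, hwyv, hvyw, hself, phi7_self_right]
  ring

theorem contractCross7_dotProduct_self (u v w y : V7) :
    contractCross7 u v w y ⬝ᵥ contractCross7 u v w y =
      u ⬝ᵥ u * (gram7 ![v, w, y]).det - (gram7 ![u, v, w, y]).det := by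
  have h02 (a b c : V7) : starphi7 a b a c = 0 :=
    starphi7_eq_zero_of_eq (i := 0) (j := 2) rfl (by decide)
  have h03 (a b c : V7) : starphi7 a b c a = 0 :=
    starphi7_eq_zero_of_eq (i := 0) (j := 3) rfl (by decide)
  have h12 (a b c : V7) : starphi7 a b b c = 0 :=
    starphi7_eq_zero_of_eq (i := 1) (j := 2) rfl (by decide)
  have h13 (a b c : V7) : starphi7 a b c b = 0 :=
    starphi7_eq_zero_of_eq (i := 1) (j := 3) rfl (by decide)
  simp only [contractCross7, add_dotProduct, sub_dotProduct, dotProduct_add, dotProduct_sub,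
    smul_dotProduct, dotProduct_smul, smul_eq_mul, cross7_dotProduct_cross7, h02, h03, h12, h13,
    Matrix.det_fin_three, det_fin_four, gram7_apply, Matrix.cons_val, dotProduct_comm v u,
    dotProduct_comm w u, dotProduct_comm y u, dotProduct_comm w v, dotProduct_comm y v,
    dotProduct_comm y w]
  ring

/-- The vector `∑ₚ (-1)ᵖ φ(x₀, …, x̂ₚ, …, x₃) xₚ` for `x = (u, v, w, y)`, a scalar multiple of the
octonionic coassociator of Harvey and Lawson. -/
def coassociator7 (u v w y : V7) : V7 :=
  phi7 v w y • u - (phi7 u w y • v - phi7 u v y • w + phi7 u v w • y)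

theorem coassociator7_eq_sum (u v w y : V7) : coassociator7 u v w y =
    ∑ p : Fin 4, ((-1) ^ (p : ℕ) * phi7Alternating (![u, v, w, y] ∘ p.succAbove)) •
      ![u, v, w, y] p := by
  have h0 : ![u, v, w, y] ∘ Fin.succAbove 0 = ![v, w, y] := by ext i : 1; fin_cases i <;> rfl
  have h1 : ![u, v, w, y] ∘ Fin.succAbove 1 = ![u, w, y] := by ext i : 1; fin_cases i <;> rfl
  have h2 : ![u, v, w, y] ∘ Fin.succAbove 2 = ![u, v, y] := by ext i : 1; fin_cases i <;> rfl
  have h3 : ![u, v, w, y] ∘ Fin.succAbove 3 = ![u, v, w] := by ext i : 1; fin_cases i <;> rfl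
  simp only [coassociator7, Fin.sum_univ_four, h0, h1, h2, h3, phi7Alternating_apply,
    Matrix.cons_val, Fin.coe_ofNat_eq_mod]
  module

theorem det_gram7_eq_sq_starphi7_add_coassociator7 (u v w y : V7) :
    (gram7 ![u, v, w, y]).det =
      starphi7 u v w y ^ 2 + coassociator7 u v w y ⬝ᵥ coassociator7 u v w y := by
  have lagrange := cross7_dotProduct_self u (tripleCross7 v w y)
  rw [cross7_tripleCross7, tripleCross7_dotProduct_self, dotProduct_comm u (tripleCross7 _ _ _),
    tripleCross7_dotProduct, starphi7_rotate] at lagrange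
  have hcontract := contractCross7_dotProduct_combination u v w y
    (phi7 u w y) (-phi7 u v y) (phi7 u v w)
  have hself := contractCross7_dotProduct_self u v w y
  rw [neg_smul, ← sub_eq_add_neg] at hcontract
  rw [coassociator7]
  set X := phi7 u w y • v - phi7 u v y • w + phi7 u v w • y
  simp only [sub_dotProduct, dotProduct_sub, smul_dotProduct, dotProduct_smul, smul_eq_mul,
    dotProduct_comm X] at lagrange hcontract hself ⊢
  linear_combination hself - lagrange - 2 * hcontract

theorem stmt7_general {u v w y : V7} (hlin : LinearIndependent ℝ ![u, v, w, y]) :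
    starphi7 u v w y ^ 2 = (gram7 ![u, v, w, y]).det
      ↔ (∀ a ∈ Submodule.span ℝ ({u, v, w, y} : Set V7),
          ∀ b ∈ Submodule.span ℝ ({u, v, w, y} : Set V7),
            ∀ c ∈ Submodule.span ℝ ({u, v, w, y} : Set V7),
              phi7 a b c = 0) := by
  have hrange : Set.range ![u, v, w, y] = {u, v, w, y} := by
    simp only [Matrix.range_cons, Matrix.range_empty, Set.union_empty, Set.singleton_union]
  rw [phi7_eq_zero_on_iff, ← hrange,
    alternatingMap_eq_zero_on_span_range_iff_sum_smul_eq_zero _ hlin,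
    ← coassociator7_eq_sum, ← dotProduct_self_eq_zero,
    det_gram7_eq_sq_starphi7_add_coassociator7, left_eq_add]

/-- for orthonormal u,v,w,y spanning V, |(∗φ)(u,v,w,y)| = 1
    (V is calibrated by ∗φ up to orientation) iff φ vanishes on V. -/
theorem stmt7 (u v w y : V7)
    (horth : ∀ i j : Fin 4,
      dot7 (![u, v, w, y] i) (![u, v, w, y] j) = if i = j then 1 else 0) :
    |starphi7 u v w y| = 1
      ↔ (∀ a ∈ Submodule.span ℝ ({u, v, w, y} : Set V7),
          ∀ b ∈ Submodule.span ℝ ({u, v, w, y} : Set V7),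
            ∀ c ∈ Submodule.span ℝ ({u, v, w, y} : Set V7),
              phi7 a b c = 0) := by
  have hgram : gram7 ![u, v, w, y] = 1 :=
    Matrix.ext fun i j ↦ (horth i j).trans (Matrix.one_apply (i := i) (j := j)).symm
  have hlin : LinearIndependent ℝ ![u, v, w, y] := linearIndependent_row_of_mul_eq_one hgram
  rw [← stmt7_general hlin, hgram, Matrix.det_one, sq_eq_one_iff, abs_eq zero_le_one]
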